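/- Let G be a bipartite graph with vertex classes (A,B) and density d = e_G(A,B)/(|A||B|), and let A = {A_i}_i be a partition of A and B = {B_j}_j a partition of B such that for every S ⊆ A and T ⊆ B with |S| ≥ ε|A| and |T| ≥ ε|B| one has Σ_{i,j} (|S_i||T_j|/(|S||T|)) · |d_G(S_i,T_j) − d_{i,j}| ≤ ε, where S_i = S ∩ A_i, T_j = T ∩ B_j, and d_{i,j} = d_G(A_i,B_j). If |A|, |B| ≥ 8/ε⁴, then there exists a bipartite graph G̃ on the same vertex classes with |E(G) △ E(G̃)| ≤ Δ such that the pair (A,B) is 2ε-regular in G̃, where Δ = Σ_{i,j} |d_{i,j} − d| · |A_i||B_j|. -/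

import Mathlib

/-!
Each block `A_i × B_j` of the adjacency matrix of `G` is moved towards `0` or towards `1` until its
average becomes `d`. This gives a matrix `p` of probabilities at `ℓ¹`-distance exactly `Δ` from
`G`; being the image of `G` under an affine contraction on each block, it inherits from the weak
regularity of `G` that its averages over large `S × T` are within `ε` of `d`.

The graph `G̃` is obtained by rounding `q = (1 - ε/2) p + (ε/2) 1_G` at random. Since
`|A|, |B| ≥ 8/ε⁴`, Hoeffding's inequality and a union bound over the pairs `(S, T)` show that, with
probability at least `1 - ε/2`, all densities over large `S × T` are within `ε/4` of their
expectations; on this event `(A, B)` is `2ε`-regular. The expected number of modifications is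
`(1 - ε/2) Δ`, so its average over this event is at most `Δ`.
-/

open Finset
open scoped Classical

/-- `eCnt G A B` is the number of ordered pairs `(u,v) ∈ A × B` with `uv` an edge of `G`. -/
noncomputable def eCnt {V : Type*} [Fintype V] (G : SimpleGraph V) (A B : Finset V) : ℕ :=
  ((A ×ˢ B).filter fun p => G.Adj p.1 p.2).card

/-- The edge density `d_G(A,B)` between vertex subsets `A` and `B`. -/
noncomputable def dens {V : Type*} [Fintype V] (G : SimpleGraph V) (A B : Finset V) : ℝ :=
  eCnt G A B / (A.card * B.card)

/-- The pair `(A,B)` is `ε`-regular. -/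
def RegPair {V : Type*} [Fintype V] (G : SimpleGraph V) (ε : ℝ) (A B : Finset V) : Prop :=
  ∀ A' ⊆ A, ∀ B' ⊆ B, ε * A.card ≤ A'.card → ε * B.card ≤ B'.card →
    |dens G A B - dens G A' B'| ≤ ε

open MeasureTheory ProbabilityTheory unitInterval
open scoped BigOperators

section RandomRounding

variable {κ : Type*} [Fintype κ]

/-- The law of a random predicate on `κ` that holds at each `k` independently with probability
`q k`; it rounds the weights `q` to `0` and `1`. -/
noncomputable def bernoulliPi (q : κ → I) : Measure (κ → Prop) :=
  Measure.pi fun k => Ber(True, False, q k)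

instance (q : κ → I) : IsProbabilityMeasure (bernoulliPi q) :=
  inferInstanceAs (IsProbabilityMeasure (Measure.pi _))

lemma integral_bernoulliPi_eval (q : κ → I) (k : κ) (f : Prop → ℝ) :
    ∫ ω, f (ω k) ∂bernoulliPi q = q k * f True + (1 - q k) * f False := by
  rw [bernoulliPi, integral_comp_eval (Measurable.of_discrete (f := f)).aestronglyMeasurable,
    integral_bernoulliMeasure, smul_eq_mul, smul_eq_mul]

lemma hasSubgaussianMGF_bernoulliPi (q : κ → I) (s : Finset κ) :
    HasSubgaussianMGF (fun ω => (#{k ∈ s | ω k} : ℝ) - ∑ k ∈ s, (q k : ℝ)) (#s / 4)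
      (bernoulliPi q) := by
  let X (k : κ) (ω : κ → Prop) : ℝ := (if ω k then 1 else 0) - q k
  have hX (k : κ) : HasSubgaussianMGF (X k) (1 / 4) (bernoulliPi q) := by
    have := hasSubgaussianMGF_of_mem_Icc (μ := bernoulliPi q) (a := 0) (b := 1)
      (X := fun ω => if ω k then (1 : ℝ) else 0) (Measurable.of_discrete).aemeasurable
      (.of_forall fun ω => by split_ifs <;> simp)
    convert this using 1
    · simp only [X, integral_bernoulliPi_eval q k fun b => if b then (1 : ℝ) else 0, if_true,
        if_false, mul_one, mul_zero, add_zero]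
    · norm_num
  have hindep : iIndepFun X (bernoulliPi q) :=
    iIndepFun_pi (X := fun k (b : Prop) => (if b then (1 : ℝ) else 0) - q k)
      fun _ => Measurable.of_discrete.aemeasurable
  convert HasSubgaussianMGF.sum_of_iIndepFun hindep (s := s) fun k _ => hX k using 1
  · simp only [X, sum_sub_distrib, sum_boole]
  · rw [sum_const, nsmul_eq_mul, mul_one_div]

lemma bernoulliPi_abs_card_sub_sum_le (q : κ → I) (s : Finset κ) {η : ℝ} (hη : 0 ≤ η) :
    (bernoulliPi q).real {ω | η * #s < |(#{k ∈ s | ω k} : ℝ) - ∑ k ∈ s, (q k : ℝ)|} ≤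
      2 * Real.exp (-(2 * η ^ 2 * #s)) := by
  have h := hasSubgaussianMGF_bernoulliPi q s
  have hexp : -(η * #s) ^ 2 / (2 * ((#s / 4 : NNReal) : ℝ)) = -(2 * η ^ 2 * #s) := by
    push_cast
    rcases (Nat.cast_nonneg (α := ℝ) #s).eq_or_lt with h0 | h0
    · simp [← h0]
    · field_simp
      ring
  have hupper := h.measure_ge_le (ε := η * #s) (by positivity)
  have hlower := h.neg.measure_ge_le (ε := η * #s) (by positivity)
  rw [hexp] at hupper hlower
  rw [two_mul]
  refine (measureReal_mono fun ω hω => ?_).trans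
    ((measureReal_union_le _ _).trans (add_le_add hupper hlower))
  exact (lt_abs.1 hω).imp le_of_lt fun h => show η * #s ≤ -_ from h.le

lemma integral_bernoulliPi_card_not_iff (q : κ → I) (s : Finset κ) (r : κ → Prop) :
    ∫ ω, (#{k ∈ s | ¬(ω k ↔ r k)} : ℝ) ∂bernoulliPi q =
      ∑ k ∈ s, |(q k : ℝ) - if r k then 1 else 0| := by
  simp only [← sum_boole]
  rw [integral_finsetSum _ fun _ _ => .of_finite]
  refine sum_congr rfl fun k _ => ?_
  rw [integral_bernoulliPi_eval q k fun b => if ¬(b ↔ r k) then (1 : ℝ) else 0]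
  by_cases hr : r k
  · simp [hr, abs_of_nonpos, (q k).2.2]
  · simp [hr, abs_of_nonneg, (q k).2.1]

end RandomRounding

-- The number of disagreements is averaged only over the roundings that are good for `𝓕`, an
-- event of probability at least `1 - θ`.
lemma exists_rounding {κ : Type*} [Finite κ] (q : κ → I) (s : Finset κ) (r : κ → Prop)
    (𝓕 : Finset (Finset κ)) {η θ : ℝ} (hη : 0 ≤ η) (hθ : θ < 1)
    (h𝓕 : ∑ t ∈ 𝓕, 2 * Real.exp (-(2 * η ^ 2 * #t)) ≤ θ) :
    ∃ x : κ → Prop, (∀ t ∈ 𝓕, |(#{k ∈ t | x k} : ℝ) - ∑ k ∈ t, (q k : ℝ)| ≤ η * #t) ∧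
      (1 - θ) * #{k ∈ s | ¬(x k ↔ r k)} ≤ ∑ k ∈ s, |(q k : ℝ) - if r k then 1 else 0| := by
  cases nonempty_fintype κ
  set P := bernoulliPi q
  let bad (t : Finset κ) : Set (κ → Prop) :=
    {ω | η * #t < |(#{k ∈ t | ω k} : ℝ) - ∑ k ∈ t, (q k : ℝ)|}
  let good : Set (κ → Prop) := (⋃ t ∈ 𝓕, bad t)ᶜ
  have hgood : 1 - θ ≤ P.real good := by
    rw [probReal_compl_eq_one_sub .of_discrete]
    exact sub_le_sub_left ((measureReal_biUnion_finset_le 𝓕 bad).trans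
      ((sum_le_sum fun t _ => bernoulliPi_abs_card_sub_sum_le q t hη).trans h𝓕)) 1
  have hpos : 0 < P.real good := (sub_pos.2 hθ).trans_le hgood
  obtain ⟨x, hx, hle⟩ := exists_le_setAverage
    (f := fun ω : κ → Prop => (#{k ∈ s | ¬(ω k ↔ r k)} : ℝ))
    ((measureReal_ne_zero_iff).1 hpos.ne') (measure_ne_top P good) Integrable.of_finite.integrableOn
  refine ⟨x, fun t ht => ?_, ?_⟩
  · have : x ∉ bad t := fun h => hx (Set.mem_biUnion ht h)
    exact not_lt.1 this
  · rw [setAverage_eq, smul_eq_mul, inv_mul_eq_div, le_div_iff₀' hpos] at hle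
    rw [← integral_bernoulliPi_card_not_iff]
    calc (1 - θ) * (#{k ∈ s | ¬(x k ↔ r k)} : ℝ)
        ≤ P.real good * #{k ∈ s | ¬(x k ↔ r k)} := by gcongr
      _ ≤ ∫ ω in good, (#{k ∈ s | ¬(ω k ↔ r k)} : ℝ) ∂P := hle
      _ ≤ ∫ ω, (#{k ∈ s | ¬(ω k ↔ r k)} : ℝ) ∂P :=
        setIntegral_le_integral .of_finite (.of_forall fun _ => Nat.cast_nonneg _)

section Recentering

lemma sum_abs_eq_abs_sum {ι M : Type*} [AddCommGroup M] [LinearOrder M] [IsOrderedAddMonoid M]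
    {s : Finset ι} {f : ι → M} (h : (∀ i ∈ s, 0 ≤ f i) ∨ ∀ i ∈ s, f i ≤ 0) :
    ∑ i ∈ s, |f i| = |∑ i ∈ s, f i| := by
  rcases h with h | h
  · rw [abs_of_nonneg (sum_nonneg h)]
    exact sum_congr rfl fun i hi => abs_of_nonneg (h i hi)
  · rw [abs_of_nonpos (sum_nonpos h), ← sum_neg_distrib]
    exact sum_congr rfl fun i hi => abs_of_nonpos (h i hi)

-- Moving all of `g` towards one endpoint `c` of `[0, 1]` makes the differences `p k - g k` of one
-- sign, so that the distance of `p` from `g` is the least possible.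
lemma exists_recentering {κ : Type*} (g : κ → ℝ) (hg : ∀ k, g k ∈ I) (C : Finset κ) {d : ℝ}
    (hd : d ∈ I) :
    ∃ p : κ → I, ∑ k ∈ C, |p k - g k| = #C * |(𝔼 k ∈ C, g k) - d| ∧
      ∀ s : Finset κ, |∑ k ∈ s, (p k - d)| ≤ #s * |(𝔼 k ∈ s, g k) - 𝔼 k ∈ C, g k| := by
  obtain ⟨c, hc, a, t, ha, ht, hat, hcd⟩ :
      ∃ c : ℝ, (c = 0 ∨ c = 1) ∧ d ∈ segment ℝ (𝔼 k ∈ C, g k) c := by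
    rcases le_total d (𝔼 k ∈ C, g k) with h | h
    · exact ⟨0, .inl rfl, segment_symm ℝ (0 : ℝ) _ ▸ segment_eq_Icc (hd.1.trans h) ▸ ⟨hd.1, h⟩⟩
    · exact ⟨1, .inr rfl, segment_eq_Icc (h.trans hd.2) ▸ ⟨h, hd.2⟩⟩
  have hcI : c ∈ I := by rcases hc with rfl | rfl <;> simp
  rw [smul_eq_mul, smul_eq_mul] at hcd
  have hsum (s : Finset κ) :
      ∑ k ∈ s, (a * g k + t * c - d) = #s * (a * ((𝔼 k ∈ s, g k) - 𝔼 k ∈ C, g k)) := by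
    rw [sum_sub_distrib, sum_add_distrib, ← mul_sum, ← card_mul_expect, sum_const, sum_const,
      nsmul_eq_mul, nsmul_eq_mul]
    linear_combination (#s : ℝ) * hcd
  refine ⟨fun k => ⟨a * g k + t * c, convex_Icc 0 1 (hg k) hcI ha ht hat⟩, ?_, fun s => ?_⟩
  · have hdiff (k : κ) : a * g k + t * c - g k = t * (c - g k) := by
      linear_combination g k * hat
    have hsign : (∀ k ∈ C, 0 ≤ t * (c - g k)) ∨ ∀ k ∈ C, t * (c - g k) ≤ 0 := by
      rcases hc with rfl | rfl
      · exact .inr fun k _ => mul_nonpos_of_nonneg_of_nonpos ht (by linarith [(hg k).1])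
      · exact .inl fun k _ => mul_nonneg ht (by linarith [(hg k).2])
    have hsum_diff : ∑ k ∈ C, t * (c - g k) = #C * (d - 𝔼 k ∈ C, g k) := by
      rw [← mul_sum, sum_sub_distrib, sum_const, nsmul_eq_mul, ← card_mul_expect]
      linear_combination (#C : ℝ) * hcd - (#C : ℝ) * (𝔼 k ∈ C, g k) * hat
    simp only [hdiff]
    rw [sum_abs_eq_abs_sum hsign, hsum_diff, abs_mul, Nat.abs_cast, abs_sub_comm]
  · simp only [hsum, abs_mul, Nat.abs_cast, abs_of_nonneg ha]
    gcongr
    exact mul_le_of_le_one_left (abs_nonneg _) (by linarith)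

variable {α β : Type*} [DecidableEq α] [DecidableEq β] {A : Finset α} {B : Finset β}

lemma sum_product_eq_sum_parts (PA : Finpartition A) (PB : Finpartition B) {S : Finset α}
    {T : Finset β} (hS : S ⊆ A) (hT : T ⊆ B) (f : α × β → ℝ) :
    ∑ k ∈ S ×ˢ T, f k =
      ∑ Ai ∈ PA.parts, ∑ Bj ∈ PB.parts, ∑ k ∈ (S ∩ Ai) ×ˢ (T ∩ Bj), f k := by
  have hmaps : ∀ k ∈ S ×ˢ T, (PA.part k.1, PB.part k.2) ∈ PA.parts ×ˢ PB.parts := fun k hk =>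
    mk_mem_product (PA.part_mem.2 (hS (mem_product.1 hk).1))
      (PB.part_mem.2 (hT (mem_product.1 hk).2))
  rw [← sum_fiberwise_of_maps_to hmaps, sum_product]
  refine sum_congr rfl fun Ai hi => sum_congr rfl fun Bj hj => sum_congr ?_ fun _ _ => rfl
  ext ⟨u, v⟩
  simp only [mem_filter, mem_product, mem_inter, Prod.mk.injEq, PA.part_eq_iff_mem hi,
    PB.part_eq_iff_mem hj]
  tauto

lemma exists_blockwise_recentering (g : α × β → ℝ) (hg : ∀ k, g k ∈ I) (PA : Finpartition A)
    (PB : Finpartition B) {d : ℝ} (hd : d ∈ I) :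
    ∃ p : α × β → I,
      ∑ k ∈ A ×ˢ B, |p k - g k| = ∑ Ai ∈ PA.parts, ∑ Bj ∈ PB.parts,
        #(Ai ×ˢ Bj) * |(𝔼 k ∈ Ai ×ˢ Bj, g k) - d| ∧
      ∀ S ⊆ A, ∀ T ⊆ B, |∑ k ∈ S ×ˢ T, (p k - d)| ≤ ∑ Ai ∈ PA.parts, ∑ Bj ∈ PB.parts,
        #((S ∩ Ai) ×ˢ (T ∩ Bj)) *
          |(𝔼 k ∈ (S ∩ Ai) ×ˢ (T ∩ Bj), g k) - 𝔼 k ∈ Ai ×ˢ Bj, g k| := by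
  choose p hp_dist hp_sum using fun (Ai : Finset α) (Bj : Finset β) =>
    exists_recentering g hg (Ai ×ˢ Bj) hd
  let p' (k : α × β) : I := p (PA.part k.1) (PB.part k.2) k
  have hp' {Ai} (hi : Ai ∈ PA.parts) {Bj} (hj : Bj ∈ PB.parts) {k : α × β}
      (hk : k ∈ Ai ×ˢ Bj) : p' k = p Ai Bj k := by
    rw [mem_product] at hk
    simp only [p', PA.part_eq_of_mem hi hk.1, PB.part_eq_of_mem hj hk.2]
  refine ⟨p', ?_, fun S hS T hT => ?_⟩
  · rw [sum_product_eq_sum_parts PA PB Subset.rfl Subset.rfl]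
    refine sum_congr rfl fun Ai hi => sum_congr rfl fun Bj hj => ?_
    rw [inter_eq_right.2 (PA.le hi), inter_eq_right.2 (PB.le hj), ← hp_dist]
    exact sum_congr rfl fun k hk => by rw [hp' hi hj hk]
  · rw [sum_product_eq_sum_parts PA PB hS hT]
    refine (abs_sum_le_sum_abs _ _).trans (sum_le_sum fun Ai hi =>
      (abs_sum_le_sum_abs _ _).trans (sum_le_sum fun Bj hj => ?_))
    refine le_of_eq_of_le ?_ (hp_sum Ai Bj _)
    congr 1
    refine sum_congr rfl fun k hk => ?_
    rw [hp' hi hj (product_subset_product inter_subset_right inter_subset_right hk)]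

end Recentering

section RectangleRounding

-- Rounding `(1 - θ) p + θ 1_r` in place of `p` lowers the expected number of disagreements with
-- `r` by the factor `1 - θ`, which makes up for the factor lost in `exists_rounding`.
lemma exists_rounding_card_le {κ : Type*} [Finite κ] (p : κ → I) (s : Finset κ) (r : κ → Prop)
    (𝓕 : Finset (Finset κ)) {η θ : ℝ} (hη : 0 ≤ η) (hθ₀ : 0 ≤ θ) (hθ₁ : θ < 1)
    (h𝓕 : ∑ t ∈ 𝓕, 2 * Real.exp (-(2 * η ^ 2 * #t)) ≤ θ) :
    ∃ x : κ → Prop,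
      (#{k ∈ s | ¬(x k ↔ r k)} : ℝ) ≤ ∑ k ∈ s, |(p k : ℝ) - if r k then 1 else 0| ∧
      ∀ t ∈ 𝓕, |#{k ∈ t | x k} - ((1 - θ) * ∑ k ∈ t, (p k : ℝ) + θ * #{k ∈ t | r k})| ≤
        η * #t := by
  let one_r (k : κ) : ℝ := if r k then 1 else 0
  have hone_r (k : κ) : one_r k ∈ I := by
    simp only [one_r]
    split_ifs <;> simp
  let q (k : κ) : I := ⟨(1 - θ) * p k + θ * one_r k,
    convex_Icc 0 1 (p k).2 (hone_r k) (sub_pos.2 hθ₁).le hθ₀ (sub_add_cancel 1 θ)⟩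
  have hq_dist : ∑ k ∈ s, |(q k : ℝ) - one_r k| = (1 - θ) * ∑ k ∈ s, |(p k : ℝ) - one_r k| := by
    rw [mul_sum]
    refine sum_congr rfl fun k _ => ?_
    rw [← abs_of_pos (sub_pos.2 hθ₁), ← abs_mul]
    congr 1
    simp only [q]
    ring
  have hq_sum (t : Finset κ) :
      ∑ k ∈ t, (q k : ℝ) = (1 - θ) * ∑ k ∈ t, (p k : ℝ) + θ * #{k ∈ t | r k} := by
    simp only [q, one_r, sum_add_distrib, ← mul_sum, sum_boole]
  obtain ⟨x, hx_sum, hx_dist⟩ := exists_rounding q s r 𝓕 hη hθ₁ h𝓕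
  refine ⟨x, le_of_mul_le_mul_left (hx_dist.trans_eq hq_dist) (sub_pos.2 hθ₁), fun t ht => ?_⟩
  rw [← hq_sum]
  exact hx_sum t ht

variable {α β : Type*} [Finite α] [Finite β]

lemma exists_rounding_rectangles (p : α × β → I) (r : α × β → Prop) (A : Finset α) (B : Finset β)
    {η θ m : ℝ} (hη : 0 ≤ η) (hθ₀ : 0 ≤ θ) (hθ₁ : θ < 1)
    (hm : 2 ^ (#A + #B) * (2 * Real.exp (-(2 * η ^ 2 * m))) ≤ θ) :
    ∃ x : α × β → Prop,
      (#{k ∈ A ×ˢ B | ¬(x k ↔ r k)} : ℝ) ≤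
        ∑ k ∈ A ×ˢ B, |(p k : ℝ) - if r k then 1 else 0| ∧
      ∀ S ⊆ A, ∀ T ⊆ B, m ≤ #(S ×ˢ T) →
        |#{k ∈ S ×ˢ T | x k} -
            ((1 - θ) * ∑ k ∈ S ×ˢ T, (p k : ℝ) + θ * #{k ∈ S ×ˢ T | r k})| ≤
          η * #(S ×ˢ T) := by
  let 𝓕 : Finset (Finset (α × β)) :=
    {R ∈ (A.powerset ×ˢ B.powerset).image fun P => P.1 ×ˢ P.2 | m ≤ #R}
  have h𝓕_card : (#𝓕 : ℝ) ≤ 2 ^ (#A + #B) := by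
    have : #𝓕 ≤ 2 ^ (#A + #B) := by
      calc #𝓕 ≤ #(A.powerset ×ˢ B.powerset) := (card_filter_le _ _).trans card_image_le
        _ = 2 ^ (#A + #B) := by rw [card_product, card_powerset, card_powerset, pow_add]
    exact_mod_cast this
  have h𝓕 : ∑ R ∈ 𝓕, 2 * Real.exp (-(2 * η ^ 2 * #R)) ≤ θ := by
    calc ∑ R ∈ 𝓕, 2 * Real.exp (-(2 * η ^ 2 * #R))
        ≤ ∑ R ∈ 𝓕, 2 * Real.exp (-(2 * η ^ 2 * m)) := by
          gcongr with R hR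
          exact (mem_filter.1 hR).2
      _ = #𝓕 * (2 * Real.exp (-(2 * η ^ 2 * m))) := by rw [sum_const, nsmul_eq_mul]
      _ ≤ 2 ^ (#A + #B) * (2 * Real.exp (-(2 * η ^ 2 * m))) := by gcongr
      _ ≤ θ := hm
  obtain ⟨x, hx_dist, hx_sum⟩ := exists_rounding_card_le p (A ×ˢ B) r 𝓕 hη hθ₀ hθ₁ h𝓕
  refine ⟨x, hx_dist, fun S hS T hT hST => hx_sum _ (mem_filter.2 ⟨?_, hST⟩)⟩
  exact mem_image.2 ⟨(S, T), mk_mem_product (mem_powerset.2 hS) (mem_powerset.2 hT), rfl⟩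

lemma two_pow_mul_exp_neg_le {n : ℕ} {ε : ℝ} (hε : 0 < ε) (hn : 4 / ε ≤ n) :
    2 ^ n * (2 * Real.exp (-(2 * n))) ≤ ε / 2 := by
  have hn₀ : (0 : ℝ) < n := lt_of_lt_of_le (by positivity) hn
  calc 2 ^ n * (2 * Real.exp (-(2 * n)))
      ≤ Real.exp 1 ^ n * (2 * Real.exp (-(2 * n))) := by
        gcongr
        linarith [Real.add_one_le_exp 1]
    _ = 2 * Real.exp (-n) := by
        rw [← Real.exp_nat_mul, mul_left_comm, ← Real.exp_add]
        ring_nf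
    _ ≤ 2 / n := by
        rw [Real.exp_neg, ← div_eq_mul_inv]
        gcongr
        linarith [Real.add_one_le_exp (n : ℝ)]
    _ ≤ ε / 2 := by
        rw [div_le_iff₀ hε] at hn
        rw [div_le_div_iff₀ hn₀ two_pos]
        linarith

-- For `|S| ≥ 2ε|A|` and `|T| ≥ 2ε|B|` the Hoeffding exponent `2 (ε / 4) ^ 2 |S| |T|` is at least
-- `ε ^ 4 |A| |B| / 2 ≥ 2 (|A| + |B|)`, which beats the number `2 ^ (|A| + |B|)` of pairs `(S, T)`.
lemma two_pow_mul_exp_neg_le_of_le {a b : ℕ} {ε : ℝ} (hε : 0 < ε) (hε₁ : ε ≤ 1)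
    (ha : 8 / ε ^ 4 ≤ a) (hb : 8 / ε ^ 4 ≤ b) :
    2 ^ (a + b) * (2 * Real.exp (-(2 * (ε / 4) ^ 2 * (4 * ε ^ 2 * (a * b))))) ≤ ε / 2 := by
  have hab : 4 / ε ≤ (a + b : ℕ) := by
    have : 4 / ε ≤ 8 / ε ^ 4 := by
      gcongr
      · norm_num
      · exact pow_le_of_le_one hε.le hε₁ four_ne_zero
    push_cast
    linarith [b.cast_nonneg (α := ℝ)]
  have hexp : 2 * ((a + b : ℕ) : ℝ) ≤ 2 * (ε / 4) ^ 2 * (4 * ε ^ 2 * (a * b)) := by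
    rw [div_le_iff₀' (by positivity)] at ha hb
    push_cast
    linarith [mul_le_mul_of_nonneg_right ha b.cast_nonneg,
      mul_le_mul_of_nonneg_right hb a.cast_nonneg]
  refine le_trans ?_ (two_pow_mul_exp_neg_le hε hab)
  gcongr

lemma exists_regular_rounding (p : α × β → I) (r : α × β → Prop) {A : Finset α} {B : Finset β}
    {d ε : ℝ} (hε : 0 < ε) (hε₂ : ε ≤ 1 / 2) (hA : 8 / ε ^ 4 ≤ #A) (hB : 8 / ε ^ 4 ≤ #B)
    (hr : #{k ∈ A ×ˢ B | r k} = #(A ×ˢ B) * d) (hp : ∑ k ∈ A ×ˢ B, (p k : ℝ) = #(A ×ˢ B) * d)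
    (hpST : ∀ S ⊆ A, ∀ T ⊆ B, ε * #A ≤ #S → ε * #B ≤ #T →
      |∑ k ∈ S ×ˢ T, (p k : ℝ) - #(S ×ˢ T) * d| ≤ ε * #(S ×ˢ T)) :
    ∃ x : α × β → Prop,
      (#{k ∈ A ×ˢ B | ¬(x k ↔ r k)} : ℝ) ≤
        ∑ k ∈ A ×ˢ B, |(p k : ℝ) - if r k then 1 else 0| ∧
      |#{k ∈ A ×ˢ B | x k} - #(A ×ˢ B) * d| ≤ ε / 4 * #(A ×ˢ B) ∧
      ∀ S ⊆ A, ∀ T ⊆ B, 2 * ε * #A ≤ #S → 2 * ε * #B ≤ #T →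
        |#{k ∈ S ×ˢ T | x k} - #(S ×ˢ T) * d| ≤ 7 / 4 * ε * #(S ×ˢ T) := by
  have hlarge {S : Finset α} {T : Finset β} (hS : 2 * ε * #A ≤ #S) (hT : 2 * ε * #B ≤ #T) :
      4 * ε ^ 2 * (#A * #B) ≤ #(S ×ˢ T) := by
    rw [card_product, Nat.cast_mul]
    calc 4 * ε ^ 2 * (#A * #B) = 2 * ε * #A * (2 * ε * #B) := by ring
      _ ≤ #S * #T := by gcongr
  obtain ⟨x, hx_dist, hx⟩ := exists_rounding_rectangles p r A B (η := ε / 4) (θ := ε / 2)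
    (by positivity) (by positivity) (by linarith)
    (two_pow_mul_exp_neg_le_of_le hε (by linarith) hA hB)
  refine ⟨x, hx_dist, ?_, fun S hS T hT hSA hTB => ?_⟩
  · have hmean : (1 - ε / 2) * ∑ k ∈ A ×ˢ B, (p k : ℝ) + ε / 2 * #{k ∈ A ×ˢ B | r k} =
        #(A ×ˢ B) * d := by
      rw [hp, hr]
      ring
    rw [← hmean]
    exact hx A Subset.rfl B Subset.rfl <| hlarge
      (mul_le_of_le_one_left (Nat.cast_nonneg _) (by linarith))
      (mul_le_of_le_one_left (Nat.cast_nonneg _) (by linarith))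
  · have hround := hx S hS T hT (hlarge hSA hTB)
    have hregular := hpST S hS T hT
      (le_trans (by gcongr; linarith) hSA) (le_trans (by gcongr; linarith) hTB)
    have hmix : |ε / 2 * (#{k ∈ S ×ˢ T | r k} - ∑ k ∈ S ×ˢ T, (p k : ℝ))| ≤
        ε / 2 * #(S ×ˢ T) := by
      rw [abs_mul, abs_of_pos (half_pos hε)]
      gcongr
      exact abs_sub_le_of_nonneg_of_le (Nat.cast_nonneg _) (Nat.cast_le.2 (card_filter_le _ _))
        (sum_nonneg fun k _ => (p k).2.1)
        ((sum_le_card_nsmul _ _ 1 fun k _ => (p k).2.2).trans_eq (nsmul_one _))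
    rw [abs_le] at hround hregular hmix ⊢
    constructor <;> linarith

end RectangleRounding

section Graph

variable {V : Type*}

lemma exists_isBipartiteWith {A B : Finset V} (hAB : Disjoint A B) (x : V × V → Prop) :
    ∃ H : SimpleGraph V, H.IsBipartiteWith A B ∧
      ∀ k ∈ A ×ˢ B, (H.Adj k.1 k.2 ↔ x k) := by
  refine ⟨.fromRel fun u v => u ∈ A ∧ v ∈ B ∧ x (u, v), ⟨disjoint_coe.2 hAB, ?_⟩, ?_⟩
  · rintro u v ⟨-, h | h⟩
    · exact .inl ⟨h.1, h.2.1⟩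
    · exact .inr ⟨h.2.1, h.1⟩
  · rintro ⟨u, v⟩ hk
    obtain ⟨hu, hv⟩ := mem_product.1 hk
    have hvA : v ∉ A := disjoint_right.1 hAB hv
    simp [hu, hv, hvA, ne_of_mem_of_not_mem hu hvA]

lemma ncard_symmDiff_edgeSet_le {G H : SimpleGraph V} {A B : Finset V}
    (hG : G.IsBipartiteWith A B) (hH : H.IsBipartiteWith A B) :
    (symmDiff G.edgeSet H.edgeSet).ncard ≤
      #{k ∈ A ×ˢ B | ¬(H.Adj k.1 k.2 ↔ G.Adj k.1 k.2)} := by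
  set M := {k ∈ A ×ˢ B | ¬(H.Adj k.1 k.2 ↔ G.Adj k.1 k.2)}
  have hsub : symmDiff G.edgeSet H.edgeSet ⊆ (fun k : V × V => s(k.1, k.2)) '' M := by
    intro e he
    induction e with | h u v
    have hne : ¬(H.Adj u v ↔ G.Adj u v) := by
      simp only [Set.mem_symmDiff, SimpleGraph.mem_edgeSet] at he
      tauto
    have hside : u ∈ A ∧ v ∈ B ∨ u ∈ B ∧ v ∈ A := by
      by_cases h : G.Adj u v
      · exact hG.mem_of_adj h
      · exact hH.mem_of_adj (by tauto)
    rcases hside with ⟨hu, hv⟩ | ⟨hu, hv⟩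
    · exact ⟨(u, v), mem_filter.2 ⟨mk_mem_product hu hv, hne⟩, rfl⟩
    · rw [G.adj_comm, H.adj_comm] at hne
      exact ⟨(v, u), mem_filter.2 ⟨mk_mem_product hv hu, hne⟩, Sym2.eq_swap⟩
  calc (symmDiff G.edgeSet H.edgeSet).ncard
      ≤ ((fun k : V × V => s(k.1, k.2)) '' M).ncard :=
        Set.ncard_le_ncard hsub (M.finite_toSet.image _)
    _ ≤ (M : Set (V × V)).ncard := Set.ncard_image_le M.finite_toSet
    _ = #M := Set.ncard_coe_finset M

variable [Fintype V] (G : SimpleGraph V)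

lemma dens_eq_expect (S T : Finset V) :
    dens G S T = 𝔼 k ∈ S ×ˢ T, if G.Adj k.1 k.2 then (1 : ℝ) else 0 := by
  rw [_root_.dens, eCnt, expect_eq_sum_div_card, sum_boole, card_product, Nat.cast_mul]

lemma card_product_mul_dens (S T : Finset V) :
    #(S ×ˢ T) * dens G S T = #{k ∈ S ×ˢ T | G.Adj k.1 k.2} := by
  rw [dens_eq_expect, card_mul_expect, sum_boole]

lemma dens_mem_unitInterval (S T : Finset V) : dens G S T ∈ I := by
  rw [_root_.dens, eCnt, ← Nat.cast_mul, ← card_product]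
  exact ⟨by positivity, div_le_one_of_le₀ (Nat.cast_le.2 (card_filter_le _ _)) (by positivity)⟩

variable {G}

lemma abs_dens_sub_le {S T : Finset V} (hS : S.Nonempty) (hT : T.Nonempty) {d δ : ℝ}
    (h : |#{k ∈ S ×ˢ T | G.Adj k.1 k.2} - #(S ×ˢ T) * d| ≤ δ * #(S ×ˢ T)) :
    |dens G S T - d| ≤ δ := by
  have hpos : (0 : ℝ) < #(S ×ˢ T) := Nat.cast_pos.2 (hS.product hT).card_pos
  rw [← card_product_mul_dens, ← mul_sub, abs_mul, Nat.abs_cast, mul_comm] at h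
  exact le_of_mul_le_mul_right h hpos

lemma regPair_of_one_lt {A B : Finset V} {ε : ℝ} (hA : A.Nonempty) (hε : 1 < ε) :
    RegPair G ε A B := by
  intro A' hA' B' _ hcard _
  have hpos : (0 : ℝ) < #A := Nat.cast_pos.2 hA.card_pos
  have hle : (#A' : ℝ) ≤ #A := Nat.cast_le.2 (card_le_card hA')
  exact absurd (hcard.trans hle) (not_le.2 (lt_mul_of_one_lt_left hpos hε))

/-- The weak regularity of a pair of partitions: over large `S × T`, the densities of `G` on
the traces `(S ∩ A_i) × (T ∩ B_j)` are within `ε` of those on the blocks on average. -/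
def IsWeakRegular [DecidableEq V] (G : SimpleGraph V) (ε : ℝ) {A B : Finset V}
    (PA : Finpartition A) (PB : Finpartition B) : Prop :=
  ∀ S ⊆ A, ∀ T ⊆ B, ε * #A ≤ #S → ε * #B ≤ #T →
    ∑ Ai ∈ PA.parts, ∑ Bj ∈ PB.parts, (#(S ∩ Ai) : ℝ) * #(T ∩ Bj) / (#S * #T) *
      |dens G (S ∩ Ai) (T ∩ Bj) - dens G Ai Bj| ≤ ε

lemma IsWeakRegular.exists_weights [DecidableEq V] {A B : Finset V} {PA : Finpartition A}
    {PB : Finpartition B} {ε d : ℝ} (h : IsWeakRegular G ε PA PB) (hd : d ∈ I) :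
    ∃ p : V × V → I,
      ∑ k ∈ A ×ˢ B, |(p k : ℝ) - if G.Adj k.1 k.2 then 1 else 0| =
        ∑ Ai ∈ PA.parts, ∑ Bj ∈ PB.parts, |dens G Ai Bj - d| * ((#Ai : ℝ) * #Bj) ∧
      ∑ k ∈ A ×ˢ B, (p k : ℝ) = #(A ×ˢ B) * d ∧
      ∀ S ⊆ A, ∀ T ⊆ B, ε * #A ≤ #S → ε * #B ≤ #T →
        |∑ k ∈ S ×ˢ T, (p k : ℝ) - #(S ×ˢ T) * d| ≤ ε * #(S ×ˢ T) := by
  obtain ⟨p, hp_dist, hp_sum⟩ := exists_blockwise_recentering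
    (fun k : V × V => if G.Adj k.1 k.2 then (1 : ℝ) else 0)
    (fun k => by split_ifs <;> simp) PA PB hd
  simp only [← dens_eq_expect, sum_sub_distrib, sum_const, nsmul_eq_mul] at hp_dist hp_sum
  refine ⟨p, ?_, ?_, fun S hS T hT hSA hTB => ?_⟩
  · simp only [hp_dist, card_product, Nat.cast_mul, mul_comm]
  · have hzero := hp_sum A Subset.rfl B Subset.rfl
    rw [sum_eq_zero fun Ai hi => sum_eq_zero fun Bj hj => by
      rw [inter_eq_right.2 (PA.le hi), inter_eq_right.2 (PB.le hj), sub_self, abs_zero, mul_zero]]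
      at hzero
    exact sub_eq_zero.1 (abs_nonpos_iff.1 hzero)
  · rcases (S ×ˢ T).eq_empty_or_nonempty with hST | hST
    · simp [hST]
    · have hweak := h S hS T hT hSA hTB
      simp only [← Nat.cast_mul, ← card_product, div_mul_eq_mul_div, ← sum_div] at hweak
      exact (hp_sum S hS T hT).trans ((div_le_iff₀ (Nat.cast_pos.2 hST.card_pos)).1 hweak)

lemma exists_regPair_of_weights {A B : Finset V} (hAB : Disjoint A B) {ε : ℝ} (hε : 0 < ε)
    (hε₂ : ε ≤ 1 / 2) (hA : 8 / ε ^ 4 ≤ #A) (hB : 8 / ε ^ 4 ≤ #B) (p : V × V → I)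
    (hp : ∑ k ∈ A ×ˢ B, (p k : ℝ) = #(A ×ˢ B) * dens G A B)
    (hpST : ∀ S ⊆ A, ∀ T ⊆ B, ε * #A ≤ #S → ε * #B ≤ #T →
      |∑ k ∈ S ×ˢ T, (p k : ℝ) - #(S ×ˢ T) * dens G A B| ≤ ε * #(S ×ˢ T)) :
    ∃ H : SimpleGraph V, H.IsBipartiteWith A B ∧
      (#{k ∈ A ×ˢ B | ¬(H.Adj k.1 k.2 ↔ G.Adj k.1 k.2)} : ℝ) ≤
        ∑ k ∈ A ×ˢ B, |(p k : ℝ) - if G.Adj k.1 k.2 then 1 else 0| ∧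
      RegPair H (2 * ε) A B := by
  obtain ⟨x, hx_dist, hxAB, hxST⟩ := exists_regular_rounding p (fun k => G.Adj k.1 k.2) hε hε₂
    hA hB (card_product_mul_dens G A B).symm hp hpST
  obtain ⟨H, hH, hadj⟩ := exists_isBipartiteWith hAB x
  have hfilter {S T : Finset V} (hS : S ⊆ A) (hT : T ⊆ B) :
      {k ∈ S ×ˢ T | x k} = {k ∈ S ×ˢ T | H.Adj k.1 k.2} :=
    filter_congr fun k hk => (hadj k (product_subset_product hS hT hk)).symm
  have hA₀ : (0 : ℝ) < #A := lt_of_lt_of_le (by positivity) hA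
  have hB₀ : (0 : ℝ) < #B := lt_of_lt_of_le (by positivity) hB
  refine ⟨H, hH, ?_, fun S hS T hT hSA hTB => ?_⟩
  · rwa [filter_congr fun k hk => not_congr (iff_congr (hadj k hk) Iff.rfl)]
  · have hS₀ : (0 : ℝ) < #S := lt_of_lt_of_le (by positivity) hSA
    have hT₀ : (0 : ℝ) < #T := lt_of_lt_of_le (by positivity) hTB
    rw [Nat.cast_pos, card_pos] at hA₀ hB₀ hS₀ hT₀
    have hdensAB := abs_dens_sub_le hA₀ hB₀ (hfilter Subset.rfl Subset.rfl ▸ hxAB)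
    have hdensST := abs_dens_sub_le hS₀ hT₀ (hfilter hS hT ▸ hxST S hS T hT hSA hTB)
    rw [abs_le] at hdensAB hdensST ⊢
    constructor <;> linarith

end Graph

/-- **The perturbation lemma (Lemma 2.4).**
Let `G` be a bipartite graph with vertex classes `(A,B)` and density `d`, and let
`PA ∪ PB` be a weak `ε`-regular partition of `G` in the bipartite sense. If
`|A|, |B| ≥ 8/ε⁴`, then by modifying at most `Δ = Σ_{i,j} |d_{i,j} − d|·|A_i||B_j|` edges
one can turn `G` into a bipartite graph `G̃` (on the same vertex classes) in which the
pair `(A,B)` is `2ε`-regular. -/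
theorem perturbation_lemma {V : Type*} [Fintype V] [DecidableEq V] (G : SimpleGraph V)
    (A B : Finset V) (hAB : Disjoint A B)
    (hbip : ∀ u v, G.Adj u v → (u ∈ A ∧ v ∈ B) ∨ (u ∈ B ∧ v ∈ A))
    (PA : Finpartition A) (PB : Finpartition B) (ε : ℝ) (hε : 0 < ε)
    (hweak : ∀ S ⊆ A, ∀ T ⊆ B, ε * A.card ≤ S.card → ε * B.card ≤ T.card →
      ∑ Ai ∈ PA.parts, ∑ Bj ∈ PB.parts,
        ((S ∩ Ai).card : ℝ) * ((T ∩ Bj).card : ℝ) / (S.card * T.card) *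
          |dens G (S ∩ Ai) (T ∩ Bj) - dens G Ai Bj| ≤ ε)
    (hA : (8 : ℝ) / ε ^ 4 ≤ A.card) (hB : (8 : ℝ) / ε ^ 4 ≤ B.card) :
    ∃ Gt : SimpleGraph V,
      (∀ u v, Gt.Adj u v → (u ∈ A ∧ v ∈ B) ∨ (u ∈ B ∧ v ∈ A)) ∧
      ((symmDiff G.edgeSet Gt.edgeSet).ncard : ℝ) ≤
        ∑ Ai ∈ PA.parts, ∑ Bj ∈ PB.parts,
          |dens G Ai Bj - dens G A B| * ((Ai.card : ℝ) * Bj.card) ∧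
      RegPair Gt (2 * ε) A B := by
  have hbipG : G.IsBipartiteWith A B := ⟨disjoint_coe.2 hAB, hbip⟩
  rcases lt_or_ge (1 / 2) ε with hε₂ | hε₂
  · have hA₀ : (0 : ℝ) < #A := lt_of_lt_of_le (by positivity) hA
    refine ⟨G, hbip, ?_, regPair_of_one_lt (card_pos.1 (Nat.cast_pos.1 hA₀)) (by linarith)⟩
    rw [symmDiff_self, Set.bot_eq_empty, Set.ncard_empty, Nat.cast_zero]
    positivity
  · obtain ⟨p, hp_dist, hp, hpST⟩ :=
      IsWeakRegular.exists_weights hweak (dens_mem_unitInterval G A B)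
    obtain ⟨Gt, hGt, hGt_dist, hreg⟩ := exists_regPair_of_weights hAB hε hε₂ hA hB p hp hpST
    refine ⟨Gt, hGt.mem_of_adj, ?_, hreg⟩
    exact (Nat.cast_le.2 (ncard_symmDiff_edgeSet_le hbipG hGt)).trans (hGt_dist.trans_eq hp_dist)
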